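/- Given block matrices A, B, C, K of appropriate block-diagonal/block lower triangular structure and the block downshift operator Z, define Φ_xx = (I - Z(A + BKC))^{-1}, Φ_xy = Φ_xx·Z·B·K, Φ_ux = K·C·Φ_xx, and Φ_uy = K + K·C·Φ_xx·Z·B·K. Then all four matrices Φ_xx, Φ_xy, Φ_ux, Φ_uy are block lower triangular. -/

import Mathlib

open Matrix MeasureTheory

/-- A matrix with `(T+1)×(T+1)` blocks is block lower triangular if every block
strictly above the block diagonal is zero. -/
def IsBLT {T a b : ℕ} (M : Matrix (Fin (T+1) × Fin a) (Fin (T+1) × Fin b) ℝ) : Prop :=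
  ∀ p q, p.1 < q.1 → M p q = 0

/-- Strictly block lower triangular: all blocks on and above the block diagonal vanish. -/
def IsStrictBLT {T a b : ℕ} (M : Matrix (Fin (T+1) × Fin a) (Fin (T+1) × Fin b) ℝ) : Prop :=
  ∀ p q, p.1 ≤ q.1 → M p q = 0

/-- Block diagonal: off-diagonal blocks vanish. -/
def IsBD {T a b : ℕ} (M : Matrix (Fin (T+1) × Fin a) (Fin (T+1) × Fin b) ℝ) : Prop :=
  ∀ p q, p.1 ≠ q.1 → M p q = 0

/-- `lead t ht M` is the leading principal block submatrix `M(:t)` consisting of the first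
`t+1` block rows and block columns of `M`. -/
def lead {T a b : ℕ} (t : ℕ) (ht : t + 1 ≤ T + 1)
    (M : Matrix (Fin (T+1) × Fin a) (Fin (T+1) × Fin b) ℝ) :
    Matrix (Fin (t+1) × Fin a) (Fin (t+1) × Fin b) ℝ :=
  M.submatrix (Prod.map (Fin.castLE ht) id) (Prod.map (Fin.castLE ht) id)

/-- The block downshift operator: `T` identity `n×n` blocks on the first block subdiagonal,
zeros elsewhere. -/
def dshift (n T : ℕ) : Matrix (Fin (T+1) × Fin n) (Fin (T+1) × Fin n) ℝ :=
  fun p q => if (p.1 : ℕ) = (q.1 : ℕ) + 1 ∧ p.2 = q.2 then 1 else 0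

/-!
Causality of matrices between signals is quantified by their delay: delays add under
multiplication, block lower triangular matrices have delay `0`, and the downshift `Z` has delay
`1`, hence so does `N = Z(A + BKC)`. The delay of `N ^ k` is then at least `k`, which exceeds every
time for large `k`, so `N` is nilpotent and `(1 - N)⁻¹` is the finite sum of the powers of `N`, a
matrix of delay `0`. The remaining maps are sums of products of matrices of known delay.
-/

theorem inv_one_sub_eq_geom_sum {R m : Type*} [Fintype m] [DecidableEq m] [CommRing R]
    {N : Matrix m m R} {k : ℕ} (hN : N ^ k = 0) : (1 - N)⁻¹ = ∑ i ∈ Finset.range k, N ^ i :=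
  Matrix.inv_eq_right_inv (by rw [mul_neg_geom_sum, hN, sub_zero])

section Delay

variable {R l m n : Type*} {r : l → ℕ} {s : m → ℕ} {c : n → ℕ} {d e : ℕ}

/-- `HasDelay M r c d` says that `M`, as a linear map from signals with time stamps `c` to signals
with time stamps `r`, is causal with delay at least `d`. The time stamps need not be injective:
indices with the same stamp form a block. The inequality is arranged so as to avoid the truncated
subtraction `r i - d`. -/
def HasDelay [Zero R] (M : Matrix m n R) (r : m → ℕ) (c : n → ℕ) (d : ℕ) : Prop :=
  ∀ ⦃i j⦄, r i < c j + d → M i j = 0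

namespace HasDelay

theorem mono [Zero R] {M : Matrix m n R} (hM : HasDelay M s c e) (hde : d ≤ e) :
    HasDelay M s c d :=
  fun _ _ hij => hM (hij.trans_le (Nat.add_le_add_left hde _))

protected theorem add [AddZeroClass R] {M N : Matrix m n R} (hM : HasDelay M s c d)
    (hN : HasDelay N s c d) : HasDelay (M + N) s c d := by
  intro i j hij
  rw [Matrix.add_apply, hM hij, hN hij, add_zero]

protected theorem sum [AddCommMonoid R] {ι : Type*} {I : Finset ι} {M : ι → Matrix m n R}
    (hM : ∀ a ∈ I, HasDelay (M a) s c d) : HasDelay (∑ a ∈ I, M a) s c d := by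
  intro i j hij
  rw [Matrix.sum_apply]
  exact Finset.sum_eq_zero fun a ha => hM a ha hij

protected theorem mul [Fintype m] [NonUnitalNonAssocSemiring R] {M : Matrix l m R}
    {N : Matrix m n R} (hM : HasDelay M r s d) (hN : HasDelay N s c e) :
    HasDelay (M * N) r c (d + e) := by
  intro i j hij
  rw [Matrix.mul_apply]
  refine Finset.sum_eq_zero fun a _ => ?_
  rcases lt_or_ge (r i) (s a + d) with hia | hai
  · rw [hM hia, zero_mul]
  · have haj : s a < c j + e := by lia
    rw [hN haj, mul_zero]

protected theorem one [DecidableEq m] [Zero R] [One R] : HasDelay (1 : Matrix m m R) s s 0 := by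
  intro i j hij
  refine Matrix.one_apply_ne ?_
  rintro rfl
  exact lt_irrefl _ hij

protected theorem pow [Fintype m] [DecidableEq m] [Semiring R] {M : Matrix m m R}
    (hM : HasDelay M s s d) (k : ℕ) : HasDelay (M ^ k) s s (k * d) := by
  induction k with
  | zero => simpa only [pow_zero, Nat.zero_mul] using HasDelay.one
  | succ k ih => simpa only [pow_succ, Nat.succ_mul] using ih.mul hM

theorem isNilpotent [Fintype m] [DecidableEq m] [Semiring R] {M : Matrix m m R}
    (hM : HasDelay M s s d) (hd : 0 < d) : IsNilpotent M := by
  let k := Finset.univ.sup s + 1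
  refine ⟨k, ?_⟩
  ext i j
  have hik : s i < k := Nat.lt_succ_of_le (Finset.le_sup (Finset.mem_univ i))
  have hkd : k ≤ s j + k * d := (Nat.le_mul_of_pos_right k hd).trans (Nat.le_add_left _ _)
  exact hM.pow k (hik.trans_le hkd)

theorem inv_one_sub [Fintype m] [DecidableEq m] [CommRing R] {N : Matrix m m R}
    (hN : HasDelay N s s d) (hd : 0 < d) : HasDelay (1 - N)⁻¹ s s 0 := by
  obtain ⟨k, hk⟩ := hN.isNilpotent hd
  rw [inv_one_sub_eq_geom_sum hk]
  exact .sum fun i _ => (hN.pow i).mono (Nat.zero_le _)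

end HasDelay

end Delay

section Blocks

variable {T a b : ℕ} {M : Matrix (Fin (T + 1) × Fin a) (Fin (T + 1) × Fin b) ℝ}

theorem isBLT_iff_hasDelay_zero : IsBLT M ↔ HasDelay M (·.1) (·.1) 0 :=
  Iff.rfl

theorem IsBD.hasDelay_zero (hM : IsBD M) : HasDelay M (·.1) (·.1) 0 :=
  isBLT_iff_hasDelay_zero.1 fun p q hpq => hM p q hpq.ne

theorem hasDelay_one_dshift (n T : ℕ) : HasDelay (dshift n T) (·.1) (·.1) 1 := by
  intro p q hpq
  exact if_neg fun h => hpq.ne h.1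

end Blocks

theorem stmt6_general {R X U Y : Type*} [CommRing R] [Fintype X] [DecidableEq X] [Fintype U]
    [Fintype Y] {x : X → ℕ} {u : U → ℕ} {y : Y → ℕ}
    {Z A : Matrix X X R} {B : Matrix X U R} {C : Matrix Y X R} {K : Matrix U Y R}
    (hZ : HasDelay Z x x 1) (hA : HasDelay A x x 0) (hB : HasDelay B x u 0)
    (hC : HasDelay C y x 0) (hK : HasDelay K u y 0)
    {Φxx : Matrix X X R} {Φxy : Matrix X Y R} {Φux : Matrix U X R} {Φuy : Matrix U Y R}
    (hΦxx : Φxx = (1 - Z * (A + B * K * C))⁻¹)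
    (hΦxy : Φxy = Φxx * Z * B * K)
    (hΦux : Φux = K * C * Φxx)
    (hΦuy : Φuy = K + K * C * Φxx * Z * B * K) :
    HasDelay Φxx x x 0 ∧ HasDelay Φxy x y 1 ∧ HasDelay Φux u x 0 ∧ HasDelay Φuy u y 0 := by
  have closedLoop : HasDelay (Z * (A + B * K * C)) x x 1 := hZ.mul (hA.add ((hB.mul hK).mul hC))
  have hxx : HasDelay Φxx x x 0 := hΦxx ▸ closedLoop.inv_one_sub one_pos
  have hux : HasDelay (K * C * Φxx) u x 0 := (hK.mul hC).mul hxx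
  have hxy : HasDelay (Φxx * Z * B * K) x y 1 := ((hxx.mul hZ).mul hB).mul hK
  have feedback : HasDelay (K * C * Φxx * Z * B * K) u y 1 := ((hux.mul hZ).mul hB).mul hK
  exact ⟨hxx, hΦxy ▸ hxy, hΦux ▸ hux, hΦuy ▸ hK.add (feedback.mono zero_le_one)⟩

theorem stmt6 {T n m p : ℕ}
    (A : Matrix (Fin (T+1) × Fin n) (Fin (T+1) × Fin n) ℝ)
    (B : Matrix (Fin (T+1) × Fin n) (Fin (T+1) × Fin p) ℝ)
    (C : Matrix (Fin (T+1) × Fin m) (Fin (T+1) × Fin n) ℝ)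
    (K : Matrix (Fin (T+1) × Fin p) (Fin (T+1) × Fin m) ℝ)
    (hA : IsBD A) (hB : IsBD B) (hC : IsBD C) (hK : IsBLT K)
    (Φxx : Matrix (Fin (T+1) × Fin n) (Fin (T+1) × Fin n) ℝ)
    (Φxy : Matrix (Fin (T+1) × Fin n) (Fin (T+1) × Fin m) ℝ)
    (Φux : Matrix (Fin (T+1) × Fin p) (Fin (T+1) × Fin n) ℝ)
    (Φuy : Matrix (Fin (T+1) × Fin p) (Fin (T+1) × Fin m) ℝ)
    (hΦxx : Φxx = (1 - dshift n T * (A + B * K * C))⁻¹)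
    (hΦxy : Φxy = Φxx * dshift n T * B * K)
    (hΦux : Φux = K * C * Φxx)
    (hΦuy : Φuy = K + K * C * Φxx * dshift n T * B * K) :
    IsBLT Φxx ∧ IsBLT Φxy ∧ IsBLT Φux ∧ IsBLT Φuy := by
  simp only [isBLT_iff_hasDelay_zero] at hK ⊢
  have ⟨hxx, hxy, hux, huy⟩ := stmt6_general (hasDelay_one_dshift n T) hA.hasDelay_zero
    hB.hasDelay_zero hC.hasDelay_zero hK hΦxx hΦxy hΦux hΦuy
  exact ⟨hxx, hxy.mono zero_le_one, hux, huy⟩
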